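/- Let t and f be natural numbers with 0 < f ≤ t, and let V be a multiset of n = 3t+1 values (over an arbitrary type with decidable equality). Denote by max_mult(V) the maximum multiplicity of any element of V. If max_mult(V) < 2t + 1 + f (i.e., max_mult(V) − f < 2t+1), then there exists a multiset M contained in V (M ≤ V) such that the cardinality of M is n − t − f = 2t + 1 − f and max_mult(M) ≤ t. -/

import Mathlib

/-- The maximum multiplicity of any element of a multiset
(0 for the empty multiset). -/
def maxMult {α : Type*} [DecidableEq α] (V : Multiset α) : ℕ :=
  V.toFinset.sup V.count

/-!
The submultisets of `V` with multiplicities at most `t` are those of the truncation of `V`, in which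
every multiplicity `m` is replaced by `min m t`, so only the size of the truncation matters. Either
two values occur at least `t` times, and they alone contribute `2 * t` to it, or at most one value
is cut down, which costs at most `maxMult V - t` elements.
-/

theorem exists_submultiset_card_eq {α : Type*} {V : Multiset α} {k : ℕ} (hk : k ≤ V.card) :
    ∃ M ≤ V, M.card = k := by
  have hpos : 0 < (Multiset.powersetCard k V).card := by
    rw [Multiset.card_powersetCard]
    exact Nat.choose_pos hk
  obtain ⟨M, hM⟩ := Multiset.card_pos_iff_exists_mem.1 hpos
  exact ⟨M, Multiset.mem_powersetCard.1 hM⟩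

section

variable {α : Type*} [DecidableEq α] {V : Multiset α} {t : ℕ} {a b : α}

theorem maxMult_le_iff : maxMult V ≤ t ↔ ∀ x, V.count x ≤ t := by
  refine ⟨fun h x ↦ ?_, fun h ↦ Finset.sup_le fun x _ ↦ h x⟩
  by_cases hx : x ∈ V
  · exact (Finset.le_sup (f := V.count) (Multiset.mem_toFinset.2 hx)).trans h
  · simp [hx]

theorem count_le_maxMult (V : Multiset α) (a : α) : V.count a ≤ maxMult V :=
  maxMult_le_iff.1 le_rfl a

theorem maxMult_mono : Monotone (maxMult : Multiset α → ℕ) := fun _ W h ↦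
  maxMult_le_iff.2 fun x ↦ (Multiset.count_le_of_le x h).trans (count_le_maxMult W x)

/-- The truncation of `V` at multiplicity `t`: the largest multiset contained in `V` in which no
element occurs more than `t` times. -/
def truncMult (t : ℕ) (V : Multiset α) : Multiset α :=
  V ∩ t • V.dedup

theorem truncMult_le (t : ℕ) (V : Multiset α) : truncMult t V ≤ V :=
  Multiset.inter_le_left

theorem count_truncMult (t : ℕ) (V : Multiset α) (a : α) :
    (truncMult t V).count a = min (V.count a) t := by
  by_cases ha : a ∈ V <;> simp [truncMult, ha]

theorem maxMult_truncMult_le (t : ℕ) (V : Multiset α) : maxMult (truncMult t V) ≤ t :=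
  maxMult_le_iff.2 fun x ↦ (count_truncMult t V x).trans_le (min_le_right _ _)

theorem truncMult_eq_self (h : maxMult V ≤ t) : truncMult t V = V :=
  Multiset.ext.2 fun x ↦ by rw [count_truncMult, min_eq_left (maxMult_le_iff.1 h x)]

theorem two_mul_le_card_truncMult (hab : a ≠ b) (ha : t ≤ V.count a) (hb : t ≤ V.count b) :
    2 * t ≤ (truncMult t V).card := by
  have hle : Multiset.replicate t a + Multiset.replicate t b ≤ truncMult t V := by
    refine Multiset.le_iff_count.2 fun x ↦ ?_
    rw [Multiset.count_add, Multiset.count_replicate, Multiset.count_replicate, count_truncMult]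
    grind
  simpa [two_mul] using Multiset.card_le_card hle

theorem card_le_card_truncMult_add (h : ∀ x ≠ a, V.count x ≤ t) :
    V.card ≤ (truncMult t V).card + (V.count a - t) := by
  have hle : V ≤ truncMult t V + Multiset.replicate (V.count a - t) a := by
    refine Multiset.le_iff_count.2 fun x ↦ ?_
    rw [Multiset.count_add, Multiset.count_replicate, count_truncMult]
    grind
  simpa using Multiset.card_le_card hle

theorem min_le_card_truncMult (t : ℕ) (V : Multiset α) :
    min (2 * t) (V.card - (maxMult V - t)) ≤ (truncMult t V).card := by
  by_cases hV : maxMult V ≤ t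
  · simp [truncMult_eq_self hV]
  obtain ⟨a, ha⟩ : ∃ a, t < V.count a := by simpa [maxMult_le_iff] using hV
  by_cases hb : ∃ b ≠ a, t < V.count b
  · obtain ⟨b, hba, hb⟩ := hb
    exact min_le_of_left_le (two_mul_le_card_truncMult hba hb.le ha.le)
  · push Not at hb
    have hcard : V.card ≤ (truncMult t V).card + (V.count a - t) := card_le_card_truncMult_add hb
    have hmax : V.count a ≤ maxMult V := count_le_maxMult V a
    omega

theorem stmt_0_general {k : ℕ} (hk : k ≤ 2 * t) (hkV : k + (maxMult V - t) ≤ V.card) :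
    ∃ M ≤ V, M.card = k ∧ maxMult M ≤ t := by
  have hk_card : k ≤ (truncMult t V).card :=
    (le_min hk (Nat.le_sub_of_add_le hkV)).trans (min_le_card_truncMult t V)
  obtain ⟨M, hM, hM_card⟩ := exists_submultiset_card_eq hk_card
  exact ⟨M, hM.trans (truncMult_le t V), hM_card,
    (maxMult_mono hM).trans (maxMult_truncMult_le t V)⟩

end

theorem stmt_0 {α : Type*} [DecidableEq α] (t f : ℕ) (V : Multiset α)
    (hf_pos : 0 < f) (hft : f ≤ t)
    (hcard : Multiset.card V = 3 * t + 1)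
    (hmax : maxMult V < 2 * t + 1 + f) :
    ∃ M : Multiset α, M ≤ V ∧ Multiset.card M = 2 * t + 1 - f ∧ maxMult M ≤ t :=
  stmt_0_general (by omega) (by omega)
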